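/- arXiv:2205.00386 — 3 statements merged into one kernel-verified Lean document; each statement's English description precedes it below -/
import Mathlib

section
/- Let p : E ⥤ B be a cocartesian fibration of categories. A morphism f : x ⟶ y of E is vertical (i.e. p f is an isomorphism) if and only if f has the right lifting property against every cocartesian morphism: for every cocartesian morphism f' : x' ⟶ y' of E and all morphisms g' : x' ⟶ x and g : y' ⟶ y with f ∘ g' = g ∘ f', there exists a morphism h : y' ⟶ x with h ∘ f' = g' and f ∘ h = g. -/
open CategoryTheory CategoryTheory.Limits

namespace MoensPaper

variable {E : Type*} [Category E] {B : Type*} [Category B]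

/-- A morphism `φ` of `E` is (strongly) cocartesian over `p`. -/
def IsCocart (p : E ⥤ B) {x y : E} (φ : x ⟶ y) : Prop :=
  ∀ {z : E} (ψ : x ⟶ z) (v : p.obj y ⟶ p.obj z),
    p.map ψ = p.map φ ≫ v → ∃! τ : y ⟶ z, p.map τ = v ∧ φ ≫ τ = ψ

/-- A morphism `φ` of `E` is (strongly) cartesian over `p`. -/
def IsCart (p : E ⥤ B) {x y : E} (φ : x ⟶ y) : Prop :=
  ∀ {z : E} (ψ : z ⟶ y) (v : p.obj z ⟶ p.obj x),
    p.map ψ = v ≫ p.map φ → ∃! τ : z ⟶ x, p.map τ = v ∧ τ ≫ φ = ψ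

/-- `p` is a cocartesian fibration (Grothendieck opfibration): every morphism of `B`
with domain `p.obj x` admits a cocartesian lift with source `x`. -/
def IsCocartFib (p : E ⥤ B) : Prop :=
  ∀ (x : E) (b : B) (u : p.obj x ⟶ b),
    ∃ (y : E) (φ : x ⟶ y) (h : p.obj y = b),
      IsCocart p φ ∧ p.map φ = u ≫ eqToHom h.symm

/-- `p` is a cartesian fibration (Grothendieck fibration): every morphism of `B`
with codomain `p.obj y` admits a cartesian lift with target `y`. -/
def IsCartFib (p : E ⥤ B) : Prop :=
  ∀ (y : E) (b : B) (u : b ⟶ p.obj y),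
    ∃ (x : E) (φ : x ⟶ y) (h : p.obj x = b),
      IsCart p φ ∧ p.map φ = eqToHom h ≫ u

/-!
In a cocartesian fibration, cocartesian and vertical morphisms form a factorization system.
A square from a cocartesian `φ` to `f` has a filler as soon as its image in `B` does, which is
automatic when `p f` is invertible. Conversely, factor `f = φ ≫ g` with `φ` cocartesian
over `p f` and `g` vertical: if `f` lifts against `φ`, the retract argument makes `f` a retract
of `g`, hence vertical.
-/

/-- The class of cocartesian morphisms of `p`, bundled as a `MorphismProperty` so that lifting
against all of them is membership in its `MorphismProperty.rlp`. -/
def cocartesian (p : E ⥤ B) : MorphismProperty E := fun _ _ φ ↦ IsCocart p φ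

/-- The class of vertical morphisms of `p`: those sent to isomorphisms, not only to identities. -/
abbrev vertical (p : E ⥤ B) : MorphismProperty E :=
  (MorphismProperty.isomorphisms B).inverseImage p

section Lifting

variable {p : E ⥤ B} {x y z : E} {φ : x ⟶ y}

theorem IsCocart.hom_ext (hφ : IsCocart p φ) {τ τ' : y ⟶ z}
    (map_eq : p.map τ = p.map τ') (comp_eq : φ ≫ τ = φ ≫ τ') : τ = τ' :=
  (hφ (φ ≫ τ') (p.map τ') (p.map_comp φ τ')).unique ⟨map_eq, comp_eq⟩ ⟨rfl, rfl⟩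

theorem IsCocart.hasLiftingProperty {w : E} (hφ : IsCocart p φ) (f : z ⟶ w)
    [HasLiftingProperty (p.map φ) (p.map f)] : HasLiftingProperty φ f where
  sq_hasLift {g' g} sq := by
    have base_sq : CommSq (p.map g') (p.map φ) (p.map f) (p.map g) := sq.map p
    obtain ⟨h, ⟨map_h, fac_left⟩, -⟩ := hφ g' base_sq.lift base_sq.fac_left.symm
    have map_fac_right : p.map (h ≫ f) = p.map g := by
      rw [p.map_comp, map_h, base_sq.fac_right]
    have fac_right : h ≫ f = g := hφ.hom_ext map_fac_right (by rw [reassoc_of% fac_left, sq.w])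
    exact .mk' ⟨h, fac_left, fac_right⟩

end Lifting

theorem vertical_le_rlp_cocartesian (p : E ⥤ B) : vertical p ≤ (cocartesian p).rlp := by
  intro _ _ f hf _ _ φ hφ
  have : IsIso (p.map f) := hf
  exact IsCocart.hasLiftingProperty hφ f

theorem IsCocartFib.hasFactorization {p : E ⥤ B} (hp : IsCocartFib p) :
    (cocartesian p).HasFactorization (vertical p) where
  nonempty_mapFactorizationData {x y} f := by
    obtain ⟨z, φ, hz, hφ, map_φ⟩ := hp x (p.obj y) (p.map f)
    obtain ⟨g, ⟨map_g, fac⟩, -⟩ := hφ f (eqToHom hz) (by simp [map_φ])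
    have hg : IsIso (p.map g) := map_g ▸ inferInstance
    exact ⟨{ Z := z, i := φ, p := g, fac := fac, hi := hφ, hp := hg }⟩

theorem rlp_cocartesian_eq_vertical (p : E ⥤ B)
    [(cocartesian p).HasFactorization (vertical p)] : (cocartesian p).rlp = vertical p :=
  MorphismProperty.rlp_eq_of_le_rlp_of_hasFactorization_of_isStableUnderRetracts
    (vertical_le_rlp_cocartesian p)

theorem hasLiftingProperty_iff_exists_lift {C : Type*} [Category C] {x' y' x y : C}
    (i : x' ⟶ y') (f : x ⟶ y) :
    HasLiftingProperty i f ↔ ∀ (g' : x' ⟶ x) (g : y' ⟶ y), g' ≫ f = i ≫ g →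
      ∃ h : y' ⟶ x, i ≫ h = g' ∧ h ≫ f = g where
  mp _ _ _ w := ⟨(CommSq.mk w).lift, (CommSq.mk w).fac_left, (CommSq.mk w).fac_right⟩
  mpr H := ⟨fun sq ↦
    let ⟨h, fac_left, fac_right⟩ := H _ _ sq.w
    .mk' ⟨h, fac_left, fac_right⟩⟩

/-- In a cocartesian fibration, a morphism is vertical iff it has the
right lifting property against every cocartesian morphism. -/
theorem stmt_0 (p : E ⥤ B) (hp : IsCocartFib p) {x y : E} (f : x ⟶ y) :
    IsIso (p.map f) ↔
      ∀ ⦃x' y' : E⦄ (f' : x' ⟶ y'), IsCocart p f' →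
        ∀ (g' : x' ⟶ x) (g : y' ⟶ y), g' ≫ f = f' ≫ g →
          ∃ h : y' ⟶ x, f' ≫ h = g' ∧ h ≫ f = g := by
  have := hp.hasFactorization
  calc IsIso (p.map f) ↔ vertical p f := Iff.rfl
    _ ↔ (cocartesian p).rlp f := by rw [rlp_cocartesian_eq_vertical p]
    _ ↔ _ := by
      simp only [MorphismProperty.rlp, cocartesian, hasLiftingProperty_iff_exists_lift]

end MoensPaper
end

section
/- Let p : E ⥤ B be a cartesian fibration of categories. Any commutative square in E which lies over a pullback square in B and all four of whose edges are cartesian morphisms is itself a pullback square in E. -/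
open CategoryTheory CategoryTheory.Limits

namespace MoensPaper

variable {E : Type*} [Category E] {B : Type*} [Category B]

/-!
A compatible pair of maps into `X` and `Y` determines, by the pullback in `B`, a map into `p.obj P`,
which lifts uniquely along the cartesian morphism `fst`. That the lift also agrees with the given
map into `Y` can be tested after applying `p` and after composing with `g`, because `g` is
cartesian; the first test holds by the choice of the map in `B`, the second because both squares
commute.
-/

namespace IsCart

variable {p : E ⥤ B}

theorem hom_ext {x y z : E} {φ : x ⟶ y} (hφ : IsCart p φ) {α β : z ⟶ x}
    (hmap : p.map α = p.map β) (hcomp : α ≫ φ = β ≫ φ) : α = β :=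
  (hφ (β ≫ φ) (p.map β) (p.map_comp β φ)).unique ⟨hmap, hcomp⟩ ⟨rfl, rfl⟩

theorem exists_lift_of_commSq {P X Y Z : E} {fst : P ⟶ X} {snd : P ⟶ Y} {f : X ⟶ Z} {g : Y ⟶ Z}
    (hfst : IsCart p fst) (hg : IsCart p g) (sq : CommSq fst snd f g)
    {W : E} {a : W ⟶ X} {b : W ⟶ Y} (hab : a ≫ f = b ≫ g) {v : p.obj W ⟶ p.obj P}
    (hva : v ≫ p.map fst = p.map a) (hvb : v ≫ p.map snd = p.map b) :
    ∃ τ : W ⟶ P, p.map τ = v ∧ τ ≫ fst = a ∧ τ ≫ snd = b := by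
  obtain ⟨τ, hτv, hτa⟩ := (hfst a v hva.symm).exists
  have hmap : p.map (τ ≫ snd) = p.map b := by
    rw [p.map_comp, hτv, hvb]
  have hcomp : (τ ≫ snd) ≫ g = b ≫ g := calc
    (τ ≫ snd) ≫ g = (τ ≫ fst) ≫ f := by simp only [Category.assoc, sq.w]
    _ = b ≫ g := by rw [hτa, hab]
  exact ⟨τ, hτv, hτa, hg.hom_ext hmap hcomp⟩

end IsCart

theorem stmt_4_general (p : E ⥤ B)
    {P X Y Z : E} (fst : P ⟶ X) (snd : P ⟶ Y) (f : X ⟶ Z) (g : Y ⟶ Z)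
    (w : fst ≫ f = snd ≫ g)
    (hover : IsPullback (p.map fst) (p.map snd) (p.map f) (p.map g))
    (hfst : IsCart p fst) (hg : IsCart p g) :
    IsPullback fst snd f g := by
  refine IsPullback.mk' w (fun T α β h_fst h_snd ↦ ?hom_ext) (fun T a b hab ↦ ?exists_lift)
  case hom_ext =>
    have hmap : p.map α = p.map β := by
      apply hover.hom_ext
      · simp only [← p.map_comp, h_fst]
      · simp only [← p.map_comp, h_snd]
    exact hfst.hom_ext hmap h_fst
  case exists_lift =>
    have hmap : p.map a ≫ p.map f = p.map b ≫ p.map g := by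
      simp only [← p.map_comp, hab]
    obtain ⟨v, hva, hvb⟩ := hover.exists_lift (p.map a) (p.map b) hmap
    obtain ⟨τ, -, hτa, hτb⟩ := hfst.exists_lift_of_commSq hg ⟨w⟩ hab hva hvb
    exact ⟨τ, hτa, hτb⟩

/-- In a cartesian fibration, a commutative square lying over a pullback
square in the base, all four of whose edges are cartesian, is a pullback square. -/
theorem stmt_4 (p : E ⥤ B) (hp : IsCartFib p)
    {P X Y Z : E} (fst : P ⟶ X) (snd : P ⟶ Y) (f : X ⟶ Z) (g : Y ⟶ Z)
    (w : fst ≫ f = snd ≫ g)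
    (hover : IsPullback (p.map fst) (p.map snd) (p.map f) (p.map g))
    (h₁ : IsCart p fst) (h₂ : IsCart p snd) (h₃ : IsCart p f) (h₄ : IsCart p g) :
    IsPullback fst snd f g :=
  stmt_4_general p fst snd f g w hover h₁ h₄

end MoensPaper
end

section
/- Let p : E ⥤ B be a bifibration of categories. Then p satisfies the Beck–Chevalley condition if and only if it satisfies the dual Beck–Chevalley condition: for every commutative square in E lying over a pullback square in B, if its top and bottom edges are cocartesian morphisms and its left edge is a cartesian morphism, then its right edge is cartesian. -/
open CategoryTheory CategoryTheory.Limits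

namespace MoensPaper

variable {E : Type*} [Category E] {B : Type*} [Category B]

/-- The Beck–Chevalley condition: for every commutative square in `E` lying over a
pullback square in `B` whose bottom edge is cocartesian and whose two vertical edges
are cartesian, the top edge is cocartesian. -/
def BCC (p : E ⥤ B) : Prop :=
  ∀ {d' e' d e : E} (f' : d' ⟶ e') (g' : d' ⟶ d) (g : e' ⟶ e) (f : d ⟶ e),
    f' ≫ g = g' ≫ f →
    IsPullback (p.map f') (p.map g') (p.map g) (p.map f) →
    IsCocart p f → IsCart p g → IsCart p g' →
    IsCocart p f'

/-- The dual Beck–Chevalley condition: for every commutative square in `E` lying over a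
pullback square in `B` whose top and bottom edges are cocartesian and whose left edge is
cartesian, the right edge is cartesian. -/
def DualBCC (p : E ⥤ B) : Prop :=
  ∀ {d' e' d e : E} (f' : d' ⟶ e') (g' : d' ⟶ d) (g : e' ⟶ e) (f : d ⟶ e),
    f' ≫ g = g' ≫ f →
    IsPullback (p.map f') (p.map g') (p.map g) (p.map f) →
    IsCocart p f' → IsCocart p f → IsCart p g' →
    IsCart p g

/-!
Assume the Beck–Chevalley condition, and factor the right edge `g` of a square as `k ≫ h` with `h`
cartesian and `k` lying over an isomorphism. The condition applies to the square with right edge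
`h`, whose top edge `f' ≫ k` is therefore cocartesian. As `f'` is cocartesian too, so is `k`, and a
cocartesian morphism over an isomorphism is an isomorphism; hence `g` is cartesian. The converse is
the same argument applied to a factorization of the top edge as a cocartesian morphism followed by
one lying over an isomorphism.
-/

section CartesianMorphisms

variable {p : E ⥤ B} {x y z : E}

theorem isHomLift_iff_map_eq {u : p.obj x ⟶ p.obj y} {φ : x ⟶ y} :
    p.IsHomLift u φ ↔ p.map φ = u :=
  ⟨fun _ ↦ (IsHomLift.eq_of_isHomLift p u φ).symm, by rintro rfl; infer_instance⟩

theorem isCart_iff_isStronglyCartesian {φ : x ⟶ y} :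
    IsCart p φ ↔ p.IsStronglyCartesian (p.map φ) φ := by
  constructor
  · intro hφ
    exact ⟨fun v ψ hψ ↦ by
      simpa only [isHomLift_iff_map_eq] using hφ ψ v (isHomLift_iff_map_eq.mp hψ)⟩
  · intro _ z ψ v hv
    simpa only [isHomLift_iff_map_eq] using
      Functor.IsStronglyCartesian.universal_property p (p.map φ) φ v (p.map ψ) hv ψ

theorem isCocart_iff_isStronglyCocartesian {φ : x ⟶ y} :
    IsCocart p φ ↔ p.IsStronglyCocartesian (p.map φ) φ := by
  constructor
  · intro hφ
    exact ⟨fun v ψ hψ ↦ by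
      simpa only [isHomLift_iff_map_eq] using hφ ψ v (isHomLift_iff_map_eq.mp hψ)⟩
  · intro _ z ψ v hv
    simpa only [isHomLift_iff_map_eq] using
      Functor.IsStronglyCocartesian.universal_property p (p.map φ) φ v (p.map ψ) hv ψ

theorem IsCart.isIso_comp {φ : y ⟶ z} (hφ : IsCart p φ) (k : x ⟶ y) [IsIso k] :
    IsCart p (k ≫ φ) := by
  rw [isCart_iff_isStronglyCartesian] at hφ ⊢
  rw [p.map_comp]
  infer_instance

theorem IsCocart.comp_isIso {φ : x ⟶ y} (hφ : IsCocart p φ) (k : y ⟶ z) [IsIso k] :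
    IsCocart p (φ ≫ k) := by
  rw [isCocart_iff_isStronglyCocartesian] at hφ ⊢
  rw [p.map_comp]
  infer_instance

theorem IsCart.isIso_of_comp {k : x ⟶ y} {φ : y ⟶ z} (hφ : IsCart p φ)
    (hkφ : IsCart p (k ≫ φ)) [IsIso (p.map k)] : IsIso k := by
  rw [isCart_iff_isStronglyCartesian] at hφ hkφ
  rw [p.map_comp] at hkφ
  have : p.IsStronglyCartesian (p.map k) k :=
    Functor.IsStronglyCartesian.of_comp p (g := p.map φ) (ψ := φ)
  exact Functor.IsStronglyCartesian.isIso_of_base_isIso p (p.map k) k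

theorem IsCocart.isIso_of_comp {φ : x ⟶ y} {k : y ⟶ z} (hφ : IsCocart p φ)
    (hφk : IsCocart p (φ ≫ k)) [IsIso (p.map k)] : IsIso k := by
  rw [isCocart_iff_isStronglyCocartesian] at hφ hφk
  rw [p.map_comp] at hφk
  have : p.IsStronglyCocartesian (p.map k) k :=
    Functor.IsStronglyCocartesian.of_comp p (f := p.map φ) (φ := φ)
  exact Functor.IsStronglyCocartesian.isIso_of_base_isIso p (p.map k) k

theorem IsCartFib.exists_isIso_map_comp_isCart (hp : IsCartFib p) (g : x ⟶ y) :
    ∃ (w : E) (k : x ⟶ w) (φ : w ⟶ y), IsIso (p.map k) ∧ IsCart p φ ∧ k ≫ φ = g := by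
  obtain ⟨w, φ, hw, hφ, hmap⟩ := hp y _ (p.map g)
  obtain ⟨k, ⟨hk, fac⟩, -⟩ := hφ g (eqToHom hw.symm) (by simp [hmap])
  exact ⟨w, k, φ, hk ▸ inferInstance, hφ, fac⟩

theorem IsCocartFib.exists_isCocart_comp_isIso_map (hp : IsCocartFib p) (f : x ⟶ y) :
    ∃ (w : E) (φ : x ⟶ w) (k : w ⟶ y), IsCocart p φ ∧ IsIso (p.map k) ∧ φ ≫ k = f := by
  obtain ⟨w, φ, hw, hφ, hmap⟩ := hp x _ (p.map f)
  obtain ⟨k, ⟨hk, fac⟩, -⟩ := hφ f (eqToHom hw) (by simp [hmap])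
  exact ⟨w, φ, k, hφ, hk ▸ inferInstance, fac⟩

end CartesianMorphisms

theorem isPullback_comp_isIso_iff {C : Type*} [Category C] {P X X' Y Z : C} {fst : P ⟶ X}
    {snd : P ⟶ Y} {k : X ⟶ X'} [IsIso k] {f : X' ⟶ Z} {g : Y ⟶ Z} :
    IsPullback (fst ≫ k) snd f g ↔ IsPullback fst snd (k ≫ f) g :=
  ⟨fun h ↦ h.of_iso (.refl _) (asIso k).symm (.refl _) (.refl _)
      (by simp) (by simp) (by simp) (by simp),
    fun h ↦ h.of_iso (.refl _) (asIso k) (.refl _) (.refl _)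
      (by simp) (by simp) (by simp) (by simp)⟩

theorem BCC.dualBCC {p : E ⥤ B} (H : BCC p) (hp : IsCartFib p) : DualBCC p := by
  intro d' e' d e f' g' g f comm pb hf' hf hg'
  obtain ⟨w, k, h, _, hh, rfl⟩ := hp.exists_isIso_map_comp_isCart g
  rw [p.map_comp, ← isPullback_comp_isIso_iff, ← p.map_comp] at pb
  have hf'k : IsCocart p (f' ≫ k) :=
    H (f' ≫ k) g' h f ((Category.assoc _ _ _).trans comm) pb hf hh hg'
  have : IsIso k := hf'.isIso_of_comp hf'k
  exact fun {_} ↦ hh.isIso_comp k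

theorem DualBCC.bcc {p : E ⥤ B} (H : DualBCC p) (hp : IsCocartFib p) : BCC p := by
  intro d' e' d e f' g' g f comm pb hf hg hg'
  obtain ⟨w, h, k, hh, _, rfl⟩ := hp.exists_isCocart_comp_isIso_map f'
  rw [p.map_comp, isPullback_comp_isIso_iff, ← p.map_comp] at pb
  have hkg : IsCart p (k ≫ g) :=
    H h g' (k ≫ g) f ((Category.assoc _ _ _).symm.trans comm) pb hh hf hg'
  have : IsIso k := hg.isIso_of_comp hkg
  exact fun {_} ↦ hh.comp_isIso k

/-- A bifibration satisfies the Beck–Chevalley condition iff it satisfies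
the dual Beck–Chevalley condition. -/
theorem stmt_8 (p : E ⥤ B) (hcart : IsCartFib p) (hcocart : IsCocartFib p) :
    BCC p ↔ DualBCC p :=
  ⟨fun H ↦ H.dualBCC hcart, fun H ↦ H.bcc hcocart⟩

end MoensPaper
end
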